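/- Let K be a field of characteristic zero and let A be an associative (not necessarily unital) K-algebra satisfying x³ = 0 for all x ∈ A and x²(yz − zy) = (yz − zy)x² for all x, y, z ∈ A. Then for all x, y, z, t ∈ A: tx²(yz − zy) = 0 and tyzx² = 0; consequently S₃(y,z,t)·x² = 0 and d₃(y,z,t;x²) = 0, where S₃(y,z,t) = yzt + zty + tyz − zyt − ytz − tzy and d₃(y,z,t;x²) = Σ_{σ} sign(σ)·u_{σ(1)}x²u_{σ(2)}u_{σ(3)} with (u₁,u₂,u₃) = (y,z,t). -/

import Mathlib

/-!
Let `c` commute with all squares, hence with all `ab + ba`. Linearizing `x³ = 0` gives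
`x²t + xtx + tx² = 0`, so `tx² = -(x(xt) + (xt)x)` and `x²t = -(x(tx) + (tx)x)` also commute with
`c`. Linearizing `x³ = 0` at `x`, `t`, `c` gives `xct + tcx = -2(xt + tx)c`; multiplying by `x` on
the left turns this into `3tx²c = 0`. Consequently `tcx² = ctx² = tx²c = 0`. When `c` is allowed to
be any commutator, this says that `tyzx²` is symmetric in `t`, `y`, `z`, so `6tyzx²` is the sum of
the permuted products of `t`, `y`, `z`, times `x²`, which vanishes.
-/

section NonAssoc

variable {R : Type*} [NonUnitalNonAssocRing R]

theorem sum_perm_mul_eq_zero_of_cube_eq_zero (hcube : ∀ x : R, x * x * x = 0) (a b c : R) :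
    a * b * c + b * a * c + a * c * b + b * c * a + c * a * b + c * b * a = 0 := by
  have expansion : a * b * c + b * a * c + a * c * b + b * c * a + c * a * b + c * b * a =
      (a + b + c) * (a + b + c) * (a + b + c) - (a + b) * (a + b) * (a + b)
        - (a + c) * (a + c) * (a + c) - (b + c) * (b + c) * (b + c)
        + a * a * a + b * b * b + c * c * c := by
    simp only [mul_add, add_mul]
    abel
  simpa only [hcube, sub_zero, add_zero] using expansion

theorem commute_mul_add_mul_of_commute_sq {c : R} (hc : ∀ x : R, Commute (x * x) c) (a b : R) :
    Commute (a * b + b * a) c := by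
  have polarization : a * b + b * a = (a + b) * (a + b) - a * a - b * b := by
    simp only [mul_add, add_mul]
    abel
  rw [polarization]
  exact ((hc (a + b)).sub_left (hc a)).sub_left (hc b)

end NonAssoc

section NilOfIndexThree

variable {A : Type*} [NonUnitalRing A]

theorem sq_mul_add_mul_mul_add_mul_sq_eq_zero (h2 : IsSMulRegular A 2)
    (hcube : ∀ x : A, x * x * x = 0) (x y : A) :
    x * x * y + x * y * x + y * (x * x) = 0 := by
  refine h2.right_eq_zero_of_smul ?_
  rw [← sum_perm_mul_eq_zero_of_cube_eq_zero hcube x x y, ← mul_assoc y x x]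
  abel

theorem commute_mul_sq (h2 : IsSMulRegular A 2) (hcube : ∀ x : A, x * x * x = 0) {c : A}
    (hc : ∀ x : A, Commute (x * x) c) (t x : A) : Commute (t * (x * x)) c := by
  have mul_sq_eq : t * (x * x) = -(x * (x * t) + x * t * x) := by
    rw [eq_neg_iff_add_eq_zero, ← sq_mul_add_mul_mul_add_mul_sq_eq_zero h2 hcube x t,
      ← mul_assoc x x t, add_comm]
  rw [mul_sq_eq]
  exact (commute_mul_add_mul_of_commute_sq hc x (x * t)).neg_left

theorem commute_sq_mul (h2 : IsSMulRegular A 2) (hcube : ∀ x : A, x * x * x = 0) {c : A}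
    (hc : ∀ x : A, Commute (x * x) c) (x t : A) : Commute (x * x * t) c := by
  have sq_mul_eq : x * x * t = -(x * (t * x) + t * x * x) := by
    rw [eq_neg_iff_add_eq_zero, ← sq_mul_add_mul_mul_add_mul_sq_eq_zero h2 hcube x t,
      mul_assoc x t x, mul_assoc t x x, add_assoc]
  rw [sq_mul_eq]
  exact (commute_mul_add_mul_of_commute_sq hc x (t * x)).neg_left

theorem mul_sq_mul_eq_zero_of_commute_sq (h2 : IsSMulRegular A 2) (h3 : IsSMulRegular A 3)
    (hcube : ∀ x : A, x * x * x = 0) {c : A} (hc : ∀ x : A, Commute (x * x) c) (t x : A) :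
    t * (x * x) * c = 0 := by
  have cube_polarized : x * c * t + t * c * x + 2 • ((x * t + t * x) * c) = 0 := by
    rw [two_nsmul]
    nth_rw 2 [(commute_mul_add_mul_of_commute_sq hc x t).eq]
    rw [← sum_perm_mul_eq_zero_of_cube_eq_zero hcube x t c]
    simp only [mul_add, add_mul, mul_assoc]
    abel
  have left_mul : x * x * (c * t) + x * (t * c) * x + 2 • ((x * x * t + x * t * x) * c) = 0 := by
    rw [← mul_zero x, ← cube_polarized]
    simp only [two_nsmul, mul_add, add_mul, mul_assoc]
  have sq_mul_comm : x * x * (c * t) = x * x * (t * c) := by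
    rw [← mul_assoc, (hc x).eq, mul_assoc, ← (commute_sq_mul h2 hcube hc x t).eq, mul_assoc]
  have mul_sq_comm : t * c * (x * x) = t * (x * x) * c := by
    rw [mul_assoc, ← (hc x).eq, ← mul_assoc]
  have nil_t : x * x * t + x * t * x = -(t * (x * x)) :=
    eq_neg_of_add_eq_zero_left (sq_mul_add_mul_mul_add_mul_sq_eq_zero h2 hcube x t)
  have nil_tc : x * x * (t * c) + x * (t * c) * x = -(t * (x * x) * c) :=
    mul_sq_comm ▸
      eq_neg_of_add_eq_zero_left (sq_mul_add_mul_mul_add_mul_sq_eq_zero h2 hcube x (t * c))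
  refine h3.right_eq_zero_of_smul ?_
  rw [sq_mul_comm, nil_tc, nil_t, neg_mul] at left_mul
  rw [← neg_eq_zero, ← left_mul]
  abel

theorem mul_mul_sq_eq_zero_of_commute_sq_right (h2 : IsSMulRegular A 2) (h3 : IsSMulRegular A 3)
    (hcube : ∀ x : A, x * x * x = 0) {c : A} (hc : ∀ x : A, Commute (x * x) c) (t x : A) :
    t * c * (x * x) = 0 := by
  rw [mul_assoc, ← (hc x).eq, ← mul_assoc, mul_sq_mul_eq_zero_of_commute_sq h2 h3 hcube hc]

theorem mul_mul_sq_eq_zero_of_commute_sq_left (h2 : IsSMulRegular A 2) (h3 : IsSMulRegular A 3)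
    (hcube : ∀ x : A, x * x * x = 0) {c : A} (hc : ∀ x : A, Commute (x * x) c) (t x : A) :
    c * t * (x * x) = 0 := by
  rw [mul_assoc, ← (commute_mul_sq h2 hcube hc t x).eq,
    mul_sq_mul_eq_zero_of_commute_sq h2 h3 hcube hc]

theorem mul_mul_mul_sq_eq_zero (h2 : IsSMulRegular A 2) (h3 : IsSMulRegular A 3)
    (hcube : ∀ x : A, x * x * x = 0) (hcomm : ∀ x y z : A, Commute (x * x) (y * z - z * y))
    (t y z x : A) : t * y * z * (x * x) = 0 := by
  have swap_right (a b c : A) : a * b * c * (x * x) = a * c * b * (x * x) := by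
    rw [← sub_eq_zero, ← sub_mul, mul_assoc a b c, mul_assoc a c b, ← mul_sub]
    exact mul_mul_sq_eq_zero_of_commute_sq_right h2 h3 hcube (hcomm · b c) a x
  have swap_left (a b c : A) : a * b * c * (x * x) = b * a * c * (x * x) := by
    rw [← sub_eq_zero, ← sub_mul, ← sub_mul]
    exact mul_mul_sq_eq_zero_of_commute_sq_left h2 h3 hcube (hcomm · a b) c x
  have sum_perm := congrArg (· * (x * x)) (sum_perm_mul_eq_zero_of_cube_eq_zero hcube t y z)
  simp only [add_mul, zero_mul, swap_left z, swap_right _ z, swap_left y t z] at sum_perm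
  refine h2.right_eq_zero_of_smul (h3.right_eq_zero_of_smul ?_)
  rw [← sum_perm]
  abel

theorem stmt_19_general (h2 : IsSMulRegular A 2) (h3 : IsSMulRegular A 3)
    (hcube : ∀ x : A, x * x * x = 0)
    (hcomm : ∀ x y z : A, x * x * (y * z - z * y) = (y * z - z * y) * (x * x)) (x y z t : A) :
    t * (x * x) * (y * z - z * y) = 0 ∧
    t * y * z * (x * x) = 0 ∧
    (y * z * t + z * t * y + t * y * z - z * y * t - y * t * z - t * z * y) * (x * x) = 0 ∧
    y * (x * x) * z * t + z * (x * x) * t * y + t * (x * x) * y * z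
      - z * (x * x) * y * t - y * (x * x) * t * z - t * (x * x) * z * y = 0 := by
  have mul_sq_commutator (a b c : A) : a * (x * x) * (b * c - c * b) = 0 :=
    mul_sq_mul_eq_zero_of_commute_sq h2 h3 hcube (hcomm · b c) a x
  have mul_sq_eq_zero (a b c : A) : a * b * c * (x * x) = 0 :=
    mul_mul_mul_sq_eq_zero h2 h3 hcube hcomm a b c x
  refine ⟨mul_sq_commutator t y z, mul_sq_eq_zero t y z, ?_, ?_⟩
  · simp only [add_mul, sub_mul, mul_sq_eq_zero, add_zero, sub_zero]
  · calc
      _ = y * (x * x) * (z * t - t * z) + z * (x * x) * (t * y - y * t)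
            + t * (x * x) * (y * z - z * y) := by
        simp only [mul_sub, mul_assoc]
        abel
      _ = 0 := by simp only [mul_sq_commutator, add_zero]

end NilOfIndexThree

/-- Let `K` be a field of characteristic zero and `A` an associative (not necessarily
unital) `K`-algebra satisfying `x³ = 0` and `x²(yz - zy) = (yz - zy)x²`. Then for all
`x, y, z, t ∈ A` one has `tx²(yz - zy) = 0` and `tyzx² = 0`; consequently
`S₃(y,z,t)·x² = 0` and `d₃(y,z,t;x²) = 0`, where
`S₃(y,z,t) = yzt + zty + tyz - zyt - ytz - tzy` and
`d₃(y,z,t;x²) = yx²zt + zx²ty + tx²yz - zx²yt - yx²tz - tx²zy`. -/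
theorem stmt_19 (K : Type*) [Field K] [CharZero K]
    (A : Type*) [NonUnitalRing A] [Module K A] [SMulCommClass K A A] [IsScalarTower K A A]
    (h1 : ∀ x : A, x * x * x = 0)
    (h2 : ∀ x y z : A, x * x * (y * z - z * y) = (y * z - z * y) * (x * x)) :
    ∀ x y z t : A,
      t * (x * x) * (y * z - z * y) = 0 ∧
      t * y * z * (x * x) = 0 ∧
      (y * z * t + z * t * y + t * y * z - z * y * t - y * t * z - t * z * y) * (x * x) = 0 ∧
      y * (x * x) * z * t + z * (x * x) * t * y + t * (x * x) * y * z
        - z * (x * x) * y * t - y * (x * x) * t * z - t * (x * x) * z * y = 0 := by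
  have := IsAddTorsionFree.of_isTorsionFree K A
  exact stmt_19_general (nsmul_right_injective two_ne_zero) (nsmul_right_injective three_ne_zero)
    h1 h2
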